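/- For all disjoint A,B ⊆ U, the Belnap four truth-value operators obtained by aggregating the seven truth-value parts satisfy: T_Belnap(A,B) = T(A,B) ∪ sT(A,B) = R̄A ∩ R̲(U−B); U_Belnap(A,B) = Un(A,B) = R̲(U−A−B); K_Belnap(A,B) = K(A,B) ∪ fK(A,B) = R̄A ∩ R̄B; F_Belnap(A,B) = F(A,B) ∪ sF(A,B) = R̄B ∩ R̲(U−A); moreover these four sets are pairwise disjoint and their union is U. -/

import Mathlib

/-!
Rough-set approximations and the seven truth-value parts.
`U − B` is the complement `Bᶜ`, and `U − A − B` is `(A ∪ B)ᶜ`.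
-/

namespace PBZ

variable {α : Type*}

/-- Equivalence class `[x]_R`. -/
def cls (r : α → α → Prop) (x : α) : Set α := {y | r x y}

/-- Lower approximation `R̲X = {x : [x]_R ⊆ X}`. -/
def lower (r : α → α → Prop) (X : Set α) : Set α := {x | cls r x ⊆ X}

/-- Upper approximation `R̄X = {x : [x]_R ∩ X ≠ ∅}`. -/
def upper (r : α → α → Prop) (X : Set α) : Set α := {x | (cls r x ∩ X).Nonempty}

/-- True part `T(A,B) = R̲A`. -/
def Tpart (r : α → α → Prop) (A _B : Set α) : Set α := lower r A

/-- Sometimes true part `sT(A,B) = R̲(U−B) ∩ R̄A ∩ R̄(U−A−B)`. -/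
def sTpart (r : α → α → Prop) (A B : Set α) : Set α :=
  lower r Bᶜ ∩ upper r A ∩ upper r (A ∪ B)ᶜ

/-- Unknown part `Un(A,B) = R̲(U−A−B)`. -/
def Unpart (r : α → α → Prop) (A B : Set α) : Set α := lower r (A ∪ B)ᶜ

/-- Contradictory part `K(A,B) = R̲(A∪B) ∩ R̄A ∩ R̄B`. -/
def Kpart (r : α → α → Prop) (A B : Set α) : Set α :=
  lower r (A ∪ B) ∩ upper r A ∩ upper r B

/-- Fully contradictory part `fK(A,B) = R̄A ∩ R̄B ∩ R̄(U−A−B)`. -/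
def fKpart (r : α → α → Prop) (A B : Set α) : Set α :=
  upper r A ∩ upper r B ∩ upper r (A ∪ B)ᶜ

/-- Sometimes false part `sF(A,B) = R̲(U−A) ∩ R̄B ∩ R̄(U−A−B)`. -/
def sFpart (r : α → α → Prop) (A B : Set α) : Set α :=
  lower r Aᶜ ∩ upper r B ∩ upper r (A ∪ B)ᶜ

/-- False part `F(A,B) = R̲B`. -/
def Fpart (r : α → α → Prop) (_A B : Set α) : Set α := lower r B

end PBZ

open PBZ

/-- The four Belnap truth-value operators obtained by aggregating the seven
truth-value parts, indexed by `Fin 4`. -/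
def belnapParts {α : Type*} (r : α → α → Prop) (A B : Set α) : Fin 4 → Set α :=
  ![Tpart r A B ∪ sTpart r A B, Unpart r A B,
    Kpart r A B ∪ fKpart r A B, Fpart r A B ∪ sFpart r A B]

/-!
The complement of `upper r (A ∪ B)ᶜ` is `lower r (A ∪ B)`. Cutting `upper r A ∩ upper r B` along it
gives the parts `K` and `fK`; cutting `upper r A ∩ lower r Bᶜ` gives `T` and `sT`, because a
nonempty class that avoids `B` and lies in the disjoint union of `A` and `B` lies in `A`.
Hence the four operators are the regions of the Venn diagram of `upper r A` and `upper r B`.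
-/

namespace PBZ

variable {α : Type*}

section Approximation

variable {r : α → α → Prop}

theorem lower_compl (X : Set α) : lower r Xᶜ = (upper r X)ᶜ :=
  Set.ext fun _ => Set.subset_compl_iff_disjoint_right.trans
    (not_iff_comm.mp Set.not_disjoint_iff_nonempty_inter).symm

theorem upper_compl (X : Set α) : upper r Xᶜ = (lower r X)ᶜ := by
  rw [← compl_inj_iff, ← lower_compl, compl_compl, compl_compl]

theorem lower_inter (X Y : Set α) : lower r (X ∩ Y) = lower r X ∩ lower r Y :=
  Set.ext fun _ => Set.subset_inter_iff

theorem upper_union (X Y : Set α) : upper r (X ∪ Y) = upper r X ∪ upper r Y := by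
  rw [← compl_inj_iff, Set.compl_union, ← lower_compl, ← lower_compl, ← lower_compl,
    Set.compl_union, lower_inter]

theorem lower_subset_upper (hr : Relator.LeftTotal r) (X : Set α) : lower r X ⊆ upper r X := by
  intro x hx
  obtain ⟨y, hxy⟩ := hr x
  exact ⟨y, hxy, hx hxy⟩

theorem inter_lower_union_inter_upper_compl (S X : Set α) :
    S ∩ lower r X ∪ S ∩ upper r Xᶜ = S := by
  rw [upper_compl, Set.inter_union_compl]

end Approximation

section VennRegions

/-- The four regions of the Venn diagram of `X` and `Y`, in the order of `belnapParts`: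
only `X`, neither, both, only `Y`. -/
def vennRegions (X Y : Set α) : Fin 4 → Set α :=
  ![X \ Y, (X ∪ Y)ᶜ, X ∩ Y, Y \ X]

theorem pairwise_disjoint_vennRegions (X Y : Set α) :
    Pairwise (Function.onFun Disjoint (vennRegions X Y)) := by
  intro i j hij
  refine Set.disjoint_left.mpr fun x => ?_
  by_cases hX : x ∈ X <;> by_cases hY : x ∈ Y <;> fin_cases i <;> fin_cases j <;>
    simp [vennRegions, hX, hY] at hij ⊢

theorem iUnion_vennRegions (X Y : Set α) : ⋃ i, vennRegions X Y i = Set.univ := by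
  ext x
  by_cases hX : x ∈ X <;> by_cases hY : x ∈ Y <;>
    simp [vennRegions, Fin.exists_fin_succ, hX, hY]

end VennRegions

section BelnapOperators

variable {r : α → α → Prop} {A B : Set α}

theorem lower_eq_upper_inter_lower_compl_inter_lower_union (hr : Relator.LeftTotal r)
    (hAB : Disjoint A B) : lower r A = upper r A ∩ lower r Bᶜ ∩ lower r (A ∪ B) := by
  have hA : Bᶜ ∩ (A ∪ B) = A := by
    rw [Set.inter_comm, ← Set.sdiff_eq, Set.union_sdiff_right, hAB.sdiff_eq_left]
  rw [Set.inter_assoc, ← lower_inter, hA, Set.inter_eq_right.mpr (lower_subset_upper hr A)]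

theorem Tpart_union_sTpart (hr : Relator.LeftTotal r) (hAB : Disjoint A B) :
    Tpart r A B ∪ sTpart r A B = upper r A ∩ lower r Bᶜ := by
  rw [Tpart, sTpart, lower_eq_upper_inter_lower_compl_inter_lower_union hr hAB,
    Set.inter_comm (lower r Bᶜ), inter_lower_union_inter_upper_compl]

theorem Kpart_union_fKpart (A B : Set α) :
    Kpart r A B ∪ fKpart r A B = upper r A ∩ upper r B := by
  rw [Kpart, fKpart, Set.inter_assoc, Set.inter_comm (lower r (A ∪ B)),
    inter_lower_union_inter_upper_compl]

theorem sFpart_eq_sTpart_swap (A B : Set α) : sFpart r A B = sTpart r B A := by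
  rw [sFpart, sTpart, Set.union_comm]

theorem Fpart_union_sFpart (hr : Relator.LeftTotal r) (hAB : Disjoint A B) :
    Fpart r A B ∪ sFpart r A B = upper r B ∩ lower r Aᶜ := by
  rw [sFpart_eq_sTpart_swap]
  exact Tpart_union_sTpart hr hAB.symm

theorem belnapParts_eq_vennRegions (hr : Relator.LeftTotal r) (hAB : Disjoint A B) :
    belnapParts r A B = vennRegions (upper r A) (upper r B) := by
  rw [belnapParts, vennRegions, Tpart_union_sTpart hr hAB, Unpart, Kpart_union_fKpart,
    Fpart_union_sFpart hr hAB, lower_compl, lower_compl, lower_compl, upper_union,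
    Set.sdiff_eq, Set.sdiff_eq]

end BelnapOperators

end PBZ

theorem stmt_19_general {α : Type*} {r : α → α → Prop} (hr : Relator.LeftTotal r)
    {A B : Set α} (hAB : Disjoint A B) :
    Tpart r A B ∪ sTpart r A B = upper r A ∩ lower r Bᶜ ∧
    Unpart r A B = lower r (A ∪ B)ᶜ ∧
    Kpart r A B ∪ fKpart r A B = upper r A ∩ upper r B ∧
    Fpart r A B ∪ sFpart r A B = upper r B ∩ lower r Aᶜ ∧
    (∀ i j : Fin 4, i ≠ j → belnapParts r A B i ∩ belnapParts r A B j = ∅) ∧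
    (⋃ i : Fin 4, belnapParts r A B i) = Set.univ := by
  refine ⟨Tpart_union_sTpart hr hAB, rfl, Kpart_union_fKpart A B, Fpart_union_sFpart hr hAB, ?_⟩
  rw [belnapParts_eq_vennRegions hr hAB]
  exact ⟨fun i j hij => (pairwise_disjoint_vennRegions _ _ hij).inter_eq, iUnion_vennRegions _ _⟩

/-- the Belnap four truth-value operators satisfy
`T_Belnap = T ∪ sT = R̄A ∩ R̲(U−B)`, `U_Belnap = Un = R̲(U−A−B)`,
`K_Belnap = K ∪ fK = R̄A ∩ R̄B`, `F_Belnap = F ∪ sF = R̄B ∩ R̲(U−A)`;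
moreover the four sets are pairwise disjoint and their union is `U`. -/
theorem stmt_19 {α : Type*} (r : α → α → Prop) (hr : Equivalence r)
    (A B : Set α) (hAB : A ∩ B = ∅) :
    Tpart r A B ∪ sTpart r A B = upper r A ∩ lower r Bᶜ ∧
    Unpart r A B = lower r (A ∪ B)ᶜ ∧
    Kpart r A B ∪ fKpart r A B = upper r A ∩ upper r B ∧
    Fpart r A B ∪ sFpart r A B = upper r B ∩ lower r Aᶜ ∧
    (∀ i j : Fin 4, i ≠ j → belnapParts r A B i ∩ belnapParts r A B j = ∅) ∧
    (⋃ i : Fin 4, belnapParts r A B i) = Set.univ :=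
  stmt_19_general (fun x => ⟨x, hr.refl x⟩) (Set.disjoint_iff_inter_eq_empty.mpr hAB)
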